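/- arXiv:2301.07031 — 2 statements merged into one kernel-verified Lean document; each statement's English description precedes it below -/
import Mathlib

section
/- Let d ≥ 2, λ > 0, and let S ⊂ ℤ^d be a finite symmetric set (S = -S) with ‖k‖ = λ for every k ∈ S, and let a : S → ℂ satisfy a_{-k} = conj(a_k), so that f(x) = Σ_{k ∈ S} a_k · exp(2πi⟨k, x⟩) is a real-valued function on the torus 𝕋^d = ℝ^d/ℤ^d (equivalently, f is a real-valued eigenfunction of the Laplacian on 𝕋^d with −Δf = 4π²λ² f). If f is not identically zero, then f has a zero in every closed ball (torus metric) of radius d^{3/2}/λ. -/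
open scoped Real

/-- The quotient (torus) distance on `ℝ^d / ℤ^d`, computed between lifts:
the infimum of Euclidean distances between `x` and all `ℤ^d`-translates of `y`. -/
noncomputable def torusDist {d : ℕ} (x y : EuclideanSpace ℝ (Fin d)) : ℝ :=
  ⨅ m : Fin d → ℤ, dist x (y + (WithLp.equiv 2 (Fin d → ℝ)).symm fun i => (m i : ℝ))

/-!
Let `F > 0` satisfy `ΔF = -μ F` on a cube of half-side `r`, and let `g` be the product of cosines
that is positive inside the cube, vanishes on its boundary and satisfies `Δg = -d (π / 2r)² g`.
At an interior maximum `p` of `g / F` the function `g(p) F - F(p) g` has a minimum, hence a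
nonnegative Laplacian, which forces `μ ≤ d (π / 2r)²` (the Barta inequality). For `μ = 4π²λ²` this
fails as soon as `r > √d / (4λ)`. So on such a cube neither `f` nor `-f` is positive, and `f`
vanishes somewhere in it. The cube lies in the ball of radius `√d r`, and `r ↓ √d / (4λ)` gives
a zero at distance at most `d / (4λ)`.
-/

open Topology Module
open scoped InnerProductSpace Laplacian ComplexConjugate FourierTransform

section Laplacian

variable {E F : Type*} [NormedAddCommGroup E] [NormedAddCommGroup F] [NormedSpace ℝ F]

theorem iteratedFDeriv_two_self_eq_iteratedDeriv [NormedSpace ℝ E] {f : E → F} {x : E}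
    (hf : ContDiffAt ℝ 2 f x) (v : E) :
    iteratedFDeriv ℝ 2 f x ![v, v] = iteratedDeriv 2 (fun t : ℝ ↦ f (x + t • v)) 0 := by
  have hline : deriv (fun t : ℝ ↦ x + t • v) = fun _ ↦ v := by
    ext t
    simpa using (((hasDerivAt_id t).smul_const v).const_add x).deriv
  have hline₂ : iteratedDeriv 2 (fun t : ℝ ↦ x + t • v) 0 = 0 := by
    rw [iteratedDeriv_succ, iteratedDeriv_one, hline, deriv_const]
  have hcomp := iteratedDeriv_vcomp_two (g := f) (f := fun t : ℝ ↦ x + t • v) (x := 0)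
    (by simpa using hf) (by fun_prop)
  rw [hline, hline₂, map_zero, add_zero, zero_smul, add_zero] at hcomp
  rw [show ![v, v] = fun _ ↦ v by ext i; fin_cases i <;> rfl, ← hcomp, Function.comp_def]

variable [InnerProductSpace ℝ E] [FiniteDimensional ℝ E]

theorem laplacian_eq_sum_iteratedDeriv {ι : Type*} [Fintype ι] (b : OrthonormalBasis ι ℝ E)
    {f : E → F} {x : E} (hf : ContDiffAt ℝ 2 f x) :
    Δ f x = ∑ i, iteratedDeriv 2 (fun t : ℝ ↦ f (x + t • b i)) 0 := by
  simp only [InnerProductSpace.laplacian_eq_iteratedFDeriv_orthonormalBasis f b,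
    iteratedFDeriv_two_self_eq_iteratedDeriv hf]

theorem deriv_deriv_nonneg_of_isLocalMin {u : ℝ → ℝ} {a : ℝ} (hu : ContinuousAt u a)
    (hmin : IsLocalMin u a) : 0 ≤ deriv (deriv u) a := by
  by_contra! hneg
  have hmax : IsLocalMax u a := isLocalMax_of_deriv_deriv_neg hneg hmin.deriv_eq_zero hu
  have hconst : u =ᶠ[𝓝 a] fun _ ↦ u a := by
    filter_upwards [hmin, hmax] with x hge hle using le_antisymm hle hge
  have hzero : deriv (deriv u) a = 0 := by simpa using hconst.deriv.deriv_eq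
  exact hneg.ne hzero

theorem laplacian_nonneg_of_isLocalMin {f : E → ℝ} {x : E} (hf : ContDiffAt ℝ 2 f x)
    (hmin : IsLocalMin f x) : 0 ≤ Δ f x := by
  rw [laplacian_eq_sum_iteratedDeriv (stdOrthonormalBasis ℝ E) hf]
  refine Finset.sum_nonneg fun i _ ↦ ?_
  set v := stdOrthonormalBasis ℝ E i
  have hx : x + (0 : ℝ) • v = x := by simp
  have hfx : ContDiffAt ℝ 2 f (x + (0 : ℝ) • v) := by rwa [hx]
  have hminx : IsLocalMin f (x + (0 : ℝ) • v) := by rwa [hx]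
  have hline : ContinuousAt (fun t : ℝ ↦ x + t • v) 0 := by fun_prop
  rw [iteratedDeriv_succ, iteratedDeriv_one]
  exact deriv_deriv_nonneg_of_isLocalMin (hfx.continuousAt.comp (f := fun t : ℝ ↦ x + t • v) hline)
    (hminx.comp_continuous (g := fun t : ℝ ↦ x + t • v) hline)

theorem iteratedDeriv_comp_const_add_mul {n : ℕ} {u : ℝ → F} (hu : ContDiff ℝ n u) (s c : ℝ) :
    iteratedDeriv n (fun t ↦ u (s + c * t)) 0 = c ^ n • iteratedDeriv n u s := by
  have hshift : ContDiff ℝ n fun t ↦ u (s + t) := by fun_prop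
  simp [iteratedDeriv_comp_const_smul hshift, iteratedDeriv_comp_const_add]

theorem laplacian_comp_inner {u : ℝ → F} (hu : ContDiff ℝ 2 u) (ξ x : E) :
    Δ (fun y ↦ u ⟪ξ, y⟫_ℝ) x = ‖ξ‖ ^ 2 • iteratedDeriv 2 u ⟪ξ, x⟫_ℝ := by
  let b := stdOrthonormalBasis ℝ E
  have hu' : ContDiff ℝ 2 fun y ↦ u ⟪ξ, y⟫_ℝ := hu.comp (innerSL ℝ ξ).contDiff
  rw [laplacian_eq_sum_iteratedDeriv b hu'.contDiffAt, ← b.sum_sq_inner_left ξ, Finset.sum_smul]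
  refine Finset.sum_congr rfl fun i _ ↦ ?_
  simp only [inner_add_right, inner_smul_right, mul_comm _ ⟪ξ, b i⟫_ℝ]
  exact iteratedDeriv_comp_const_add_mul hu _ _

theorem laplacian_sum {κ : Type*} {S : Finset κ} {f : κ → E → F} {x : E}
    (hf : ∀ k ∈ S, ContDiffAt ℝ 2 (f k) x) : Δ (∑ k ∈ S, f k) x = ∑ k ∈ S, Δ (f k) x := by
  simp only [InnerProductSpace.laplacian_eq_iteratedFDeriv_stdOrthonormalBasis,
    iteratedFDeriv_sum_apply hf, sum_apply]
  exact Finset.sum_comm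

end Laplacian

section Barta

variable {E : Type*} [NormedAddCommGroup E] [InnerProductSpace ℝ E] [FiniteDimensional ℝ E]
  {K : Set E} {f g : E → ℝ}

theorem exists_mul_laplacian_le_mul_laplacian (hK : IsCompact K)
    (hfK : ContinuousOn f K) (hgK : ContinuousOn g K)
    (hf : ∀ x ∈ interior K, ContDiffAt ℝ 2 f x) (hg : ∀ x ∈ interior K, ContDiffAt ℝ 2 g x)
    (hfpos : ∀ x ∈ K, 0 < f x) (hgfr : ∀ x ∈ frontier K, g x ≤ 0) (hgpos : ∃ x ∈ K, 0 < g x) :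
    ∃ x ∈ interior K, 0 < g x ∧ f x * Δ g x ≤ g x * Δ f x := by
  obtain ⟨x₀, hx₀, hgx₀⟩ := hgpos
  obtain ⟨p, hp, hmax⟩ := hK.exists_isMaxOn ⟨x₀, hx₀⟩ (hgK.div hfK fun x hx ↦ (hfpos x hx).ne')
  have hfp := hfpos p hp
  have hgp : 0 < g p :=
    (div_pos_iff_of_pos_right hfp).mp ((div_pos hgx₀ (hfpos x₀ hx₀)).trans_le (hmax hx₀))
  have hpint : p ∈ interior K := by
    by_contra hpint
    exact (hgfr p ⟨subset_closure hp, hpint⟩).not_gt hgp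
  have hmin : IsLocalMin (g p • f - f p • g) p := by
    filter_upwards [mem_interior_iff_mem_nhds.mp hpint] with x hx
    have hratio : g x * f p ≤ g p * f x := (div_le_div_iff₀ (hfpos x hx) hfp).mp (hmax hx)
    simp only [Pi.sub_apply, Pi.smul_apply, smul_eq_mul]
    linarith
  have hfC : ContDiffAt ℝ 2 (g p • f) p := (hf p hpint).const_smul (g p)
  have hgC : ContDiffAt ℝ 2 (f p • g) p := (hg p hpint).const_smul (f p)
  have hΔ : 0 ≤ Δ (g p • f - f p • g) p := laplacian_nonneg_of_isLocalMin (hfC.sub hgC) hmin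
  rw [hfC.laplacian_sub hgC, InnerProductSpace.laplacian_smul _ (hf p hpint),
    InnerProductSpace.laplacian_smul _ (hg p hpint)] at hΔ
  exact ⟨p, hpint, hgp, sub_nonneg.mp hΔ⟩

theorem exists_eq_zero_of_lt_laplacian {c : ℝ} (hK : IsCompact K) (hKc : IsPreconnected K)
    (hfK : ContinuousOn f K) (hgK : ContinuousOn g K)
    (hf : ∀ x ∈ interior K, ContDiffAt ℝ 2 f x) (hg : ∀ x ∈ interior K, ContDiffAt ℝ 2 g x)
    (hΔf : ∀ x ∈ interior K, Δ f x = -c * f x)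
    (hΔg : ∀ x ∈ interior K, 0 < g x → -c * g x < Δ g x)
    (hgfr : ∀ x ∈ frontier K, g x ≤ 0) (hgpos : ∃ x ∈ K, 0 < g x) :
    ∃ x ∈ K, f x = 0 := by
  have not_pos {h : E → ℝ} (hhK : ContinuousOn h K) (hh : ∀ x ∈ interior K, ContDiffAt ℝ 2 h x)
      (hΔh : ∀ x ∈ interior K, Δ h x = -c * h x) : ∃ x ∈ K, h x ≤ 0 := by
    by_contra! hpos
    obtain ⟨p, hp, hgp, hle⟩ :=
      exists_mul_laplacian_le_mul_laplacian hK hhK hgK hh hg hpos hgfr hgpos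
    rw [hΔh p hp] at hle
    nlinarith [mul_lt_mul_of_pos_left (hΔg p hp hgp) (hpos p (interior_subset hp))]
  obtain ⟨x, hx, hfx⟩ := not_pos hfK hf hΔf
  obtain ⟨y, hy, hfy⟩ := not_pos hfK.neg (fun x hx ↦ (hf x hx).neg) fun x hx ↦ by
    simp [InnerProductSpace.laplacian_neg, hΔf x hx]
  exact hKc.intermediate_value hx hy hfK ⟨hfx, neg_nonpos.mp hfy⟩

end Barta

section Cube

variable {ι E : Type*} [Fintype ι] [NormedAddCommGroup E] [InnerProductSpace ℝ E]
  (b : OrthonormalBasis ι ℝ E) (x₀ : E) {r : ℝ}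

/-- The closed cube of half-side `r` centred at `x₀` whose edges are parallel to the vectors of the
orthonormal basis `b`. -/
def orthoCube (r : ℝ) : Set E := {x | ∀ i, |⟪b i, x - x₀⟫_ℝ| ≤ r}

theorem orthoCube_subset_closedBall (hr : 0 ≤ r) :
    orthoCube b x₀ r ⊆ Metric.closedBall x₀ (√(Fintype.card ι) * r) := by
  intro x hx
  rw [mem_closedBall_iff_norm]
  refine le_of_sq_le_sq ?_ (by positivity)
  calc ‖x - x₀‖ ^ 2 = ∑ i, ⟪b i, x - x₀⟫_ℝ ^ 2 := (b.sum_sq_inner_right _).symm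
    _ ≤ ∑ _i : ι, r ^ 2 := Finset.sum_le_sum fun i _ ↦ sq_le_sq.mpr ((hx i).trans (le_abs_self r))
    _ = (√(Fintype.card ι) * r) ^ 2 := by simp [mul_pow]

theorem isClosed_orthoCube : IsClosed (orthoCube b x₀ r) := by
  simp only [orthoCube, Set.ofPred_forall]
  exact isClosed_iInter fun i ↦ isClosed_le (by fun_prop) continuous_const

theorem isCompact_orthoCube [FiniteDimensional ℝ E] (hr : 0 ≤ r) : IsCompact (orthoCube b x₀ r) :=
  (isCompact_closedBall _ _).of_isClosed_subset (isClosed_orthoCube b x₀)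
    (orthoCube_subset_closedBall b x₀ hr)

theorem convex_orthoCube : Convex ℝ (orthoCube b x₀ r) := by
  intro x hx y hy s t hs ht hst i
  have hcomb : s • x + t • y - x₀ = s • (x - x₀) + t • (y - x₀) := by
    rw [smul_sub, smul_sub, sub_add_sub_comm, ← add_smul, hst, one_smul]
  rw [hcomb, inner_add_right, inner_smul_right, inner_smul_right]
  simpa using convex_closedBall (0 : ℝ) r (by simpa using hx i) (by simpa using hy i) hs ht hst

theorem exists_abs_inner_eq_of_mem_frontier_orthoCube {x : E}
    (hx : x ∈ frontier (orthoCube b x₀ r)) : ∃ i, |⟪b i, x - x₀⟫_ℝ| = r := by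
  rw [(isClosed_orthoCube b x₀).frontier_eq] at hx
  by_contra! hne
  have hopen : IsOpen {y | ∀ i, |⟪b i, y - x₀⟫_ℝ| < r} := by
    simp only [Set.ofPred_forall]
    exact isOpen_iInter_of_finite fun i ↦ isOpen_lt (by fun_prop) continuous_const
  exact hx.2 (interior_maximal (fun y hy i ↦ (hy i).le) hopen fun i ↦ (hx.1 i).lt_of_ne (hne i))

/-- The product of cosines of the coordinates of `x - x₀` in the basis `b`. With `w = π / (2 * r)`
it is the first Dirichlet eigenfunction of `orthoCube b x₀ r`. -/
noncomputable def cosProd (w : ℝ) (x : E) : ℝ := ∏ i, Real.cos (w * ⟪b i, x - x₀⟫_ℝ)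

@[simp]
theorem cosProd_self (w : ℝ) : cosProd b x₀ w x₀ = 1 := by
  simp [cosProd]

theorem contDiff_cosProd (w : ℝ) {n : WithTop ℕ∞} : ContDiff ℝ n (cosProd b x₀ w) := by
  have hinner (i : ι) : ContDiff ℝ n fun x ↦ ⟪b i, x - x₀⟫_ℝ :=
    contDiff_const.inner ℝ (contDiff_id.sub contDiff_const)
  unfold cosProd
  fun_prop

theorem cosProd_eq_zero_of_mem_frontier (hr : 0 < r) {x : E}
    (hx : x ∈ frontier (orthoCube b x₀ r)) : cosProd b x₀ (π / (2 * r)) x = 0 := by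
  obtain ⟨i, hi⟩ := exists_abs_inner_eq_of_mem_frontier_orthoCube b x₀ hx
  refine Finset.prod_eq_zero (Finset.mem_univ i) ?_
  rw [← Real.cos_abs, abs_mul, hi, abs_of_pos (by positivity), div_mul_eq_mul_div,
    mul_div_mul_right _ _ hr.ne', Real.cos_pi_div_two]

theorem cosProd_add_smul [DecidableEq ι] (w : ℝ) (x : E) (i : ι) (t : ℝ) :
    cosProd b x₀ w (x + t • b i) = Real.cos (w * ⟪b i, x - x₀⟫_ℝ + w * t) *
      ∏ j ∈ Finset.univ.erase i, Real.cos (w * ⟪b j, x - x₀⟫_ℝ) := by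
  have hinner (j : ι) : ⟪b j, x + t • b i - x₀⟫_ℝ = ⟪b j, x - x₀⟫_ℝ + if j = i then t else 0 := by
    rw [add_sub_right_comm, inner_add_right, inner_smul_right, b.inner_eq_ite, mul_ite, mul_one,
      mul_zero]
  rw [cosProd, ← Finset.mul_prod_erase _ _ (Finset.mem_univ i), hinner, if_pos rfl, mul_add]
  congr 1
  refine Finset.prod_congr rfl fun j hj ↦ ?_
  rw [hinner, if_neg (Finset.ne_of_mem_erase hj), add_zero]

theorem laplacian_cosProd [FiniteDimensional ℝ E] (w : ℝ) (x : E) :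
    Δ (cosProd b x₀ w) x = -(Fintype.card ι * w ^ 2) * cosProd b x₀ w x := by
  classical
  have hline (i : ι) : iteratedDeriv 2 (fun t : ℝ ↦ cosProd b x₀ w (x + t • b i)) 0 =
      -w ^ 2 * cosProd b x₀ w x := by
    have hcos : iteratedDeriv 2 Real.cos = -Real.cos := by simp
    simp only [cosProd_add_smul]
    rw [iteratedDeriv_mul_const_field, iteratedDeriv_comp_const_add_mul Real.contDiff_cos, hcos,
      cosProd, ← Finset.mul_prod_erase _ _ (Finset.mem_univ i), Pi.neg_apply, smul_eq_mul]
    ring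
  simp only [laplacian_eq_sum_iteratedDeriv b (contDiff_cosProd b x₀ w).contDiffAt, hline]
  rw [Finset.sum_const, Finset.card_univ, nsmul_eq_mul]
  ring

end Cube

section Eigenfunction

variable {E : Type*} [NormedAddCommGroup E] [InnerProductSpace ℝ E] [FiniteDimensional ℝ E]
  {f : E → ℝ}

theorem exists_mem_orthoCube_eq_zero {ι : Type*} [Fintype ι] (b : OrthonormalBasis ι ℝ E)
    (x₀ : E) {c r : ℝ} (hr : 0 < r) (hc : Fintype.card ι * (π / (2 * r)) ^ 2 < c)
    (hf : ContDiff ℝ 2 f) (hΔf : ∀ x, Δ f x = -c * f x) : ∃ x ∈ orthoCube b x₀ r, f x = 0 := by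
  have hg : ContDiff ℝ 2 (cosProd b x₀ (π / (2 * r))) := contDiff_cosProd b x₀ _
  refine exists_eq_zero_of_lt_laplacian (isCompact_orthoCube b x₀ hr.le)
    (convex_orthoCube b x₀).isPreconnected hf.continuous.continuousOn hg.continuous.continuousOn
    (fun _ _ ↦ hf.contDiffAt) (fun _ _ ↦ hg.contDiffAt) (fun x _ ↦ hΔf x) (fun x _ hgx ↦ ?_)
    (fun x hx ↦ (cosProd_eq_zero_of_mem_frontier b x₀ hr hx).le) ⟨x₀, ?_, ?_⟩
  · rw [laplacian_cosProd]
    gcongr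
  · simp [orthoCube, hr.le]
  · simp

theorem exists_mem_closedBall_eq_zero_of_laplacian_eq {lam : ℝ} (hlam : 0 < lam)
    (hf : ContDiff ℝ 2 f) (hΔf : ∀ x, Δ f x = -(2 * π * lam) ^ 2 * f x) (x₀ : E) :
    ∃ y ∈ Metric.closedBall x₀ (finrank ℝ E / (4 * lam)), f y = 0 := by
  set n := finrank ℝ E
  let Z := {y | f y = 0}
  have hZ {r : ℝ} (hr : √n / (4 * lam) < r) : ∃ y ∈ Z, dist x₀ y ≤ √n * r := by
    have hr₀ : 0 < r := lt_of_le_of_lt (by positivity) hr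
    have hrate : √n * (π / (2 * r)) < 2 * π * lam := by
      rw [div_lt_iff₀ (by positivity)] at hr
      rw [← mul_div_assoc, div_lt_iff₀ (by positivity)]
      nlinarith [Real.pi_pos]
    have hc : Fintype.card (Fin n) * (π / (2 * r)) ^ 2 < (2 * π * lam) ^ 2 := by
      simpa [mul_pow] using pow_lt_pow_left₀ hrate (by positivity) two_ne_zero
    obtain ⟨y, hy, hfy⟩ :=
      exists_mem_orthoCube_eq_zero (stdOrthonormalBasis ℝ E) x₀ hr₀ hc hf hΔf
    exact ⟨y, hfy, by simpa [dist_comm] using orthoCube_subset_closedBall _ _ hr₀.le hy⟩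
  have hZne : Z.Nonempty := (hZ (lt_add_one _)).imp fun _ ↦ And.left
  have hlimit : Metric.infDist x₀ Z ≤ √n * (√n / (4 * lam)) := by
    refine ge_of_tendsto (x := 𝓝[>] (√n / (4 * lam)))
      ((continuous_const_mul _).continuousAt.tendsto.mono_left nhdsWithin_le_nhds) ?_
    filter_upwards [self_mem_nhdsWithin] with r hr
    obtain ⟨y, hy, hdist⟩ := hZ hr
    exact (Metric.infDist_le_dist_of_mem hy).trans hdist
  obtain ⟨y, hy, hdist⟩ :=
    (isClosed_eq hf.continuous continuous_const).exists_infDist_eq_dist hZne x₀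
  refine ⟨y, ?_, hy⟩
  rw [Metric.mem_closedBall, dist_comm, ← hdist]
  simpa [← mul_div_assoc] using hlimit

end Eigenfunction

section PlaneWave

variable {E : Type*} [NormedAddCommGroup E] [InnerProductSpace ℝ E]

/-- The plane wave `exp (2πi ⟪ξ, x⟫)` of frequency `ξ`. -/
noncomputable def planeWave (ξ x : E) : ℂ := 𝐞 ⟪ξ, x⟫_ℝ

theorem conj_planeWave (ξ x : E) : conj (planeWave ξ x) = planeWave (-ξ) x := by
  rw [planeWave, planeWave, inner_neg_left, AddChar.map_neg_eq_inv, Circle.coe_inv_eq_conj]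

theorem contDiff_fourierChar {n : WithTop ℕ∞} : ContDiff ℝ n fun s : ℝ ↦ (𝐞 s : ℂ) := by
  simp only [Real.fourierChar_apply]
  exact ((Complex.ofRealCLM.contDiff.comp (contDiff_const.mul contDiff_id)).mul
    contDiff_const).cexp

theorem iteratedDeriv_two_fourierChar (s : ℝ) :
    iteratedDeriv 2 (fun s : ℝ ↦ (𝐞 s : ℂ)) s = -(2 * π) ^ 2 * 𝐞 s := by
  have hderiv : deriv (fun s : ℝ ↦ (𝐞 s : ℂ)) = fun s ↦ 2 * π * Complex.I * 𝐞 s :=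
    funext Real.deriv_fourierChar
  rw [iteratedDeriv_succ, iteratedDeriv_one, hderiv,
    ((Real.hasDerivAt_fourierChar s).const_mul _).deriv]
  linear_combination (2 * π) ^ 2 * (𝐞 s : ℂ) * Complex.I_sq

theorem contDiff_planeWave (ξ : E) {n : WithTop ℕ∞} : ContDiff ℝ n (planeWave ξ) :=
  contDiff_fourierChar.comp (contDiff_const.inner ℝ contDiff_id)

theorem laplacian_planeWave [FiniteDimensional ℝ E] (ξ x : E) :
    Δ (planeWave ξ) x = -(2 * π * ‖ξ‖) ^ 2 • planeWave ξ x := by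
  have h := laplacian_comp_inner contDiff_fourierChar ξ x
  rw [iteratedDeriv_two_fourierChar] at h
  refine h.trans ?_
  rw [planeWave, Complex.real_smul, Complex.real_smul]
  push_cast
  ring

end PlaneWave

section TrigPoly

variable {κ E : Type*} [NormedAddCommGroup E] [InnerProductSpace ℝ E]

/-- The trigonometric polynomial `∑ k ∈ S, a k * exp (2πi ⟪ξ k, x⟫)`. The frequencies are indexed
by `κ`, so that they need not lie in a lattice. -/
noncomputable def trigPoly (S : Finset κ) (a : κ → ℂ) (ξ : κ → E) : E → ℂ :=
  ∑ k ∈ S, a k • planeWave (ξ k)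

theorem trigPoly_apply (S : Finset κ) (a : κ → ℂ) (ξ : κ → E) (x : E) :
    trigPoly S a ξ x = ∑ k ∈ S, a k * planeWave (ξ k) x := by
  simp [trigPoly]

theorem contDiff_trigPoly (S : Finset κ) (a : κ → ℂ) (ξ : κ → E) {n : WithTop ℕ∞} :
    ContDiff ℝ n (trigPoly S a ξ) := by
  simp only [funext (trigPoly_apply S a ξ)]
  exact ContDiff.sum fun k _ ↦ contDiff_const.mul (contDiff_planeWave (ξ k))

theorem laplacian_trigPoly [FiniteDimensional ℝ E] {S : Finset κ} {ξ : κ → E} {lam : ℝ}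
    (hξ : ∀ k ∈ S, ‖ξ k‖ = lam) (a : κ → ℂ) (x : E) :
    Δ (trigPoly S a ξ) x = -(2 * π * lam) ^ 2 • trigPoly S a ξ x := by
  have hwave (k : κ) : ContDiffAt ℝ 2 (planeWave (ξ k)) x := (contDiff_planeWave _).contDiffAt
  have hterm (k : κ) : ContDiffAt ℝ 2 (a k • planeWave (ξ k)) x := (hwave k).const_smul (a k)
  rw [trigPoly, laplacian_sum fun k _ ↦ hterm k, Finset.sum_apply, Finset.smul_sum]
  refine Finset.sum_congr rfl fun k hk ↦ ?_
  rw [InnerProductSpace.laplacian_smul _ (hwave k), laplacian_planeWave, hξ k hk, smul_comm,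
    Pi.smul_apply]

theorem trigPoly_im_eq_zero [InvolutiveNeg κ] {S : Finset κ} {a : κ → ℂ} {ξ : κ → E}
    (hS : ∀ k ∈ S, -k ∈ S) (ha : ∀ k ∈ S, a (-k) = conj (a k)) (hξ : ∀ k ∈ S, ξ (-k) = -ξ k)
    (x : E) : (trigPoly S a ξ x).im = 0 := by
  rw [← Complex.conj_eq_iff_im, trigPoly_apply, map_sum]
  refine Finset.sum_nbij' Neg.neg Neg.neg hS hS (fun k _ ↦ neg_neg k) (fun k _ ↦ neg_neg k) ?_
  intro k hk
  rw [map_mul, conj_planeWave, ha k hk, hξ k hk]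

theorem eigenfunction_torus_zero_in_ball_general [FiniteDimensional ℝ E] [InvolutiveNeg κ]
    {S : Finset κ} {a : κ → ℂ} {ξ : κ → E} {lam : ℝ} (hlam : 0 < lam)
    (hnorm : ∀ k ∈ S, ‖ξ k‖ = lam) (hS : ∀ k ∈ S, -k ∈ S) (ha : ∀ k ∈ S, a (-k) = conj (a k))
    (hξ : ∀ k ∈ S, ξ (-k) = -ξ k) (x₀ : E) :
    ∃ y ∈ Metric.closedBall x₀ (finrank ℝ E / (4 * lam)), trigPoly S a ξ y = 0 := by
  have hsmooth : ContDiff ℝ 2 (trigPoly S a ξ) := contDiff_trigPoly S a ξ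
  have hΔre (x) : Δ (Complex.reCLM ∘ trigPoly S a ξ) x =
      -(2 * π * lam) ^ 2 * Complex.reCLM (trigPoly S a ξ x) := by
    rw [hsmooth.contDiffAt.laplacian_CLM_comp_left, Function.comp_apply, laplacian_trigPoly hnorm,
      map_smul, smul_eq_mul]
  obtain ⟨y, hy, hre⟩ := exists_mem_closedBall_eq_zero_of_laplacian_eq hlam
    (Complex.reCLM.contDiff.comp hsmooth) hΔre x₀
  exact ⟨y, hy, Complex.ext hre (trigPoly_im_eq_zero hS ha hξ y)⟩

end TrigPoly

section Torus

/-- The integer vector `k` as an element of Euclidean space, so that `‖intVec k‖` is its Euclidean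
norm rather than the sup norm. -/
def intVec {ι : Type*} (k : ι → ℤ) : EuclideanSpace ℝ ι := WithLp.toLp 2 fun i ↦ (k i : ℝ)

theorem intVec_neg {ι : Type*} (k : ι → ℤ) : intVec (-k) = -intVec k := by
  ext i
  simp [intVec]

theorem norm_intVec {ι : Type*} [Fintype ι] (k : ι → ℤ) : ‖intVec k‖ = √(∑ i, (k i : ℝ) ^ 2) := by
  simp [EuclideanSpace.norm_eq, intVec]

theorem planeWave_intVec {ι : Type*} [Fintype ι] (k : ι → ℤ) (x : EuclideanSpace ℝ ι) :
    planeWave (intVec k) x = Complex.exp (2 * π * Complex.I * ∑ i, (k i : ℂ) * (x i : ℂ)) := by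
  simp only [planeWave, Real.fourierChar_apply, intVec, PiLp.inner_apply]
  simp only [RCLike.inner_apply, conj_trivial, mul_comm (x _)]
  push_cast
  ring_nf

theorem torusDist_le_dist {d : ℕ} (x y : EuclideanSpace ℝ (Fin d)) : torusDist x y ≤ dist x y := by
  have hbdd : BddBelow (Set.range fun m : Fin d → ℤ ↦
      dist x (y + (WithLp.equiv 2 (Fin d → ℝ)).symm fun i ↦ (m i : ℝ))) :=
    ⟨0, by rintro _ ⟨m, rfl⟩; exact dist_nonneg⟩
  have hzero : ((WithLp.equiv 2 (Fin d → ℝ)).symm fun _ ↦ ((0 : ℤ) : ℝ)) = 0 := by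
    ext i
    simp
  calc torusDist x y ≤ dist x (y + (WithLp.equiv 2 (Fin d → ℝ)).symm fun _ ↦ ((0 : ℤ) : ℝ)) :=
        ciInf_le hbdd 0
    _ = dist x y := by rw [hzero, add_zero]

end Torus

/-- A real-valued trigonometric polynomial on `𝕋^d` all of whose frequencies have
Euclidean norm `λ` (i.e. an eigenfunction of the Laplacian with eigenvalue `4π²λ²`),
if not identically zero, has a zero in every closed torus ball of radius `d^{3/2}/λ`. -/
theorem eigenfunction_torus_zero_in_ball {d : ℕ} (hd : 2 ≤ d) (lam : ℝ) (hlam : 0 < lam)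
    (S : Finset (Fin d → ℤ)) (hSsym : ∀ k ∈ S, -k ∈ S)
    (hSnorm : ∀ k ∈ S, Real.sqrt (∑ i, (k i : ℝ) ^ 2) = lam)
    (a : (Fin d → ℤ) → ℂ) (ha : ∀ k ∈ S, a (-k) = starRingEnd ℂ (a k))
    (f : EuclideanSpace ℝ (Fin d) → ℂ)
    (hf : ∀ x, f x = ∑ k ∈ S, a k *
      Complex.exp (2 * (π : ℂ) * Complex.I * ∑ i, (k i : ℂ) * (x i : ℂ)))
    (hf0 : ∃ x, f x ≠ 0)
    (x₀ : EuclideanSpace ℝ (Fin d)) :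
    ∃ y : EuclideanSpace ℝ (Fin d),
      torusDist y x₀ ≤ (d : ℝ) ^ ((3 : ℝ) / 2) / lam ∧ f y = 0 := by
  have hf' (x) : f x = trigPoly S a intVec x := by
    simp only [hf, trigPoly_apply, planeWave_intVec]
  obtain ⟨y, hy, hfy⟩ := eigenfunction_torus_zero_in_ball_general hlam
    (fun k hk ↦ (norm_intVec k).trans (hSnorm k hk)) hSsym ha (fun k _ ↦ intVec_neg k) x₀
  have hone : (1 : ℝ) ≤ d := by exact_mod_cast one_le_two.trans hd
  refine ⟨y, ?_, (hf' y).trans hfy⟩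
  calc torusDist y x₀ ≤ dist y x₀ := torusDist_le_dist y x₀
    _ ≤ d / (4 * lam) := by simpa using hy
    _ ≤ (d : ℝ) ^ ((3 : ℝ) / 2) / lam := by
      gcongr
      · exact Real.self_le_rpow_of_one_le hone (by norm_num)
      · linarith
end

section
/- Let d ∈ {2, 3} and n ∈ ℕ. Suppose for each 1 ≤ k ≤ n that φ_k : ℝ^d → ℝ is a smooth function satisfying Δφ_k = −λ_k φ_k on all of ℝ^d, where λ_k > 0 and Δ denotes the Euclidean Laplacian (sum of second partial derivatives). Let a₁, …, a_n ∈ ℝ and f(x) = Σ_{k=1}^n a_k φ_k(x). Then f has a zero in every closed ball B ⊂ ℝ^d of radius r = 2π · Σ_{k=1}^n 1/√(λ_k); that is, for every z ∈ ℝ^d there exists y with ‖y − z‖ ≤ 2π Σ_{k=1}^n λ_k^{-1/2} and f(y) = 0. -/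
/-!
A continuous compactly supported weight `w = (Δ + λ)u` satisfies `w ⋆ φ = 0` for every eigenfunction
`-Δφ = λφ`, because `Δ + λ` is self-adjoint. Taking `u = (R² - ‖x‖²)₊³` makes `w` nonnegative as
soon as `R√λ` exceeds a constant depending only on the dimension, so that convolution with `w` is a
positive average over balls of radius `R`. Since such averages commute, convolving
`f = ∑ aₖ φₖ` successively with the weights of `φ₁, …, φₙ` gives `0`; hence `f` takes a nonpositive
and, by the same argument for `-f`, a nonnegative value in every ball of radius `∑ Rₖ`, and it
vanishes there by connectedness.
-/

open scoped Real

/-- The Euclidean Laplacian `Δf(x) = Σᵢ ∂²f/∂xᵢ²(x)` of `f : ℝ^d → ℝ`. -/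
noncomputable def euclidLaplacian {d : ℕ} (f : EuclideanSpace ℝ (Fin d) → ℝ)
    (x : EuclideanSpace ℝ (Fin d)) : ℝ :=
  ∑ i, fderiv ℝ (fun y => fderiv ℝ f y (EuclideanSpace.single i 1)) x (EuclideanSpace.single i 1)

open MeasureTheory Metric Function ContinuousLinearMap
open scoped Convolution

section Convolution

variable {G : Type*} [AddCommGroup G] [TopologicalSpace G] [IsTopologicalAddGroup G]
  [MeasurableSpace G] [OpensMeasurableSpace G] {μ : Measure G} [IsFiniteMeasureOnCompacts μ]

theorem convolution_finsetSum {f : G → ℝ} (hf : Continuous f) (hfc : HasCompactSupport f)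
    {ι : Type*} (s : Finset ι) {ψ : ι → G → ℝ} (hψ : ∀ k, Continuous (ψ k)) (x : G) :
    (f ⋆[mul ℝ ℝ, μ] fun y => ∑ k ∈ s, ψ k y) x = ∑ k ∈ s, (f ⋆[mul ℝ ℝ, μ] ψ k) x := by
  simp only [convolution_mul, Finset.mul_sum]
  refine integral_finsetSum s fun k _ => ?_
  exact (hf.mul ((hψ k).comp (continuous_const.sub continuous_id))).integrable_of_hasCompactSupport
    hfc.mul_right

theorem convolution_left_comm {f g h : G → ℝ} (hf : Continuous f) (hfc : HasCompactSupport f)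
    (hg : Continuous g) (hgc : HasCompactSupport g) (hh : Continuous h) :
    f ⋆[mul ℝ ℝ, μ] (g ⋆[mul ℝ ℝ, μ] h) = g ⋆[mul ℝ ℝ, μ] (f ⋆[mul ℝ ℝ, μ] h) := by
  ext x
  have hcont : Continuous (uncurry fun s t => f s * (g t * h (x - s - t))) := by
    unfold uncurry; fun_prop
  have hsupp : HasCompactSupport (uncurry fun s t => f s * (g t * h (x - s - t))) := by
    refine HasCompactSupport.intro' (hfc.prod hgc)
      ((isClosed_tsupport f).prod (isClosed_tsupport g)) fun p hp => ?_
    rw [Set.mem_prod, not_and_or] at hp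
    rcases hp with hs | ht
    · simp [uncurry, image_eq_zero_of_notMem_tsupport hs]
    · simp [uncurry, image_eq_zero_of_notMem_tsupport ht]
  simp only [convolution_mul, ← integral_const_mul]
  rw [integral_integral_swap_of_hasCompactSupport hcont hsupp]
  simp only [sub_right_comm x, mul_left_comm]

end Convolution

section BallWeight

variable {E : Type*} [NormedAddCommGroup E]

/-- `w` is a nontrivial continuous averaging weight carried by the closed ball of radius `R`
about the origin: convolving a function with `w` yields, up to a positive factor, its averages over
the balls of radius `R`. -/
structure IsBallWeight (w : E → ℝ) (R : ℝ) : Prop where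
  continuous : Continuous w
  nonneg : 0 ≤ w
  ne_zero : w ≠ 0
  support_subset : support w ⊆ closedBall 0 R

namespace IsBallWeight

variable {w : E → ℝ} {R : ℝ}

theorem hasCompactSupport [ProperSpace E] (hw : IsBallWeight w R) : HasCompactSupport w :=
  HasCompactSupport.of_support_subset_isCompact (isCompact_closedBall 0 R) hw.support_subset

variable [ProperSpace E] [MeasurableSpace E] [BorelSpace E] {μ : Measure E}

theorem exists_nonpos_of_convolution_nonpos [IsFiniteMeasureOnCompacts μ] [μ.IsOpenPosMeasure]
    (hw : IsBallWeight w R) {f : E → ℝ} (hf : Continuous f) {x : E}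
    (hx : (w ⋆[mul ℝ ℝ, μ] f) x ≤ 0) : ∃ y ∈ closedBall x R, f y ≤ 0 := by
  by_contra! hpos
  have hpos_support : ∀ t, w t ≠ 0 → 0 < f (x - t) := fun t ht =>
    hpos _ (by simpa [dist_eq_norm] using hw.support_subset ht)
  obtain ⟨t₀, ht₀⟩ := ne_iff.1 hw.ne_zero
  refine hx.not_gt (Continuous.integral_pos_of_hasCompactSupport_nonneg_nonzero (x := t₀)
    (hw.continuous.mul (hf.comp (continuous_const.sub continuous_id)))
    hw.hasCompactSupport.mul_right (fun t => ?_) (mul_ne_zero ht₀ (hpos_support t₀ ht₀).ne'))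
  rcases eq_or_ne (w t) 0 with ht | ht
  · simp [ht]
  · exact mul_nonneg (hw.nonneg t) (hpos_support t ht).le

variable [μ.IsAddHaarMeasure]

theorem continuous_convolution (hw : IsBallWeight w R) {f : E → ℝ} (hf : Continuous f) :
    Continuous (w ⋆[mul ℝ ℝ, μ] f) :=
  hw.hasCompactSupport.continuous_convolution_left _ hw.continuous hf.locallyIntegrable

variable {ι : Type*} {w : ι → E → ℝ} {R : ι → ℝ} {ψ : ι → E → ℝ}

-- Convolution with `w j` kills `ψ j` and, since convolutions commute, preserves the equations
-- `w k ⋆ ψ k = 0`, so each induction step removes one summand at the cost of the radius `R j`.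
theorem exists_mem_closedBall_sum_nonpos (hw : ∀ k, IsBallWeight (w k) (R k)) (s : Finset ι)
    (hψ : ∀ k, Continuous (ψ k)) (hwψ : ∀ k, w k ⋆[mul ℝ ℝ, μ] ψ k = 0) (z : E) :
    ∃ y ∈ closedBall z (∑ k ∈ s, R k), ∑ k ∈ s, ψ k y ≤ 0 := by
  classical
  induction s using Finset.induction_on generalizing ψ with
  | empty => exact ⟨z, by simp⟩
  | insert j s hj ih =>
    have hcomm : ∀ k, w k ⋆[mul ℝ ℝ, μ] (w j ⋆[mul ℝ ℝ, μ] ψ k) = 0 := fun k => by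
      rw [convolution_left_comm (hw k).continuous (hw k).hasCompactSupport (hw j).continuous
        (hw j).hasCompactSupport (hψ k), hwψ k, convolution_zero]
    obtain ⟨x, hxz, hx⟩ := ih (fun k => (hw j).continuous_convolution (hψ k)) hcomm
    have hconv : (w j ⋆[mul ℝ ℝ, μ] fun y => ∑ k ∈ insert j s, ψ k y) x ≤ 0 := by
      rwa [convolution_finsetSum (hw j).continuous (hw j).hasCompactSupport _ hψ,
        Finset.sum_insert hj, hwψ j, Pi.zero_apply, zero_add]
    obtain ⟨y, hyx, hy⟩ := (hw j).exists_nonpos_of_convolution_nonpos (by fun_prop) hconv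
    refine ⟨y, ?_, hy⟩
    rw [Finset.sum_insert hj]
    exact (dist_triangle y x z).trans (add_le_add hyx hxz)

theorem exists_mem_closedBall_sum_eq_zero [NormedSpace ℝ E]
    (hw : ∀ k, IsBallWeight (w k) (R k)) (s : Finset ι) (hψ : ∀ k, Continuous (ψ k))
    (hwψ : ∀ k, w k ⋆[mul ℝ ℝ, μ] ψ k = 0) (z : E) :
    ∃ y ∈ closedBall z (∑ k ∈ s, R k), ∑ k ∈ s, ψ k y = 0 := by
  obtain ⟨y₁, hy₁, hnonpos⟩ := exists_mem_closedBall_sum_nonpos hw s hψ hwψ z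
  obtain ⟨y₂, hy₂, hnonneg⟩ := exists_mem_closedBall_sum_nonpos (μ := μ) hw s
    (ψ := fun k => (-1 : ℝ) • ψ k) (fun k => (hψ k).const_smul _)
    (fun k => by rw [convolution_smul, hwψ k, smul_zero]) z
  exact (convex_closedBall z _).isPreconnected.intermediate_value hy₁ hy₂
    (f := fun y => ∑ k ∈ s, ψ k y) (by fun_prop) ⟨hnonpos, by simpa using hnonneg⟩

end IsBallWeight

end BallWeight

section IntegrationByParts

variable {E : Type*} [NormedAddCommGroup E] [NormedSpace ℝ E]
  {F : Type*} [NormedAddCommGroup F] [NormedSpace ℝ F]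

theorem contDiff_one_fderiv_apply {f : E → F} (hf : ContDiff ℝ 2 f) (v : E) :
    ContDiff ℝ 1 (fun x => fderiv ℝ f x v) :=
  (hf.fderiv_right (by norm_num)).clm_apply contDiff_const

theorem continuous_fderiv_apply {f : E → F} (hf : ContDiff ℝ 1 f) (v : E) :
    Continuous (fun x => fderiv ℝ f x v) :=
  (hf.continuous_fderiv one_ne_zero).clm_apply continuous_const

theorem fderiv_comp_const_sub (f : E → F) (a x : E) :
    fderiv ℝ (fun y => f (a - y)) x = -fderiv ℝ f (a - x) := by
  have hneg := (ContinuousLinearEquiv.neg ℝ (M := E)).comp_right_fderiv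
    (f := fun y => f (a + y)) (x := x)
  simp only [comp_def, ContinuousLinearEquiv.neg_apply, ← sub_eq_add_neg,
    fderiv_comp_add_left] at hneg
  ext v
  simp [hneg]

variable [FiniteDimensional ℝ E] [MeasurableSpace E] [BorelSpace E] {μ : Measure E}
  [μ.IsAddHaarMeasure]

theorem integral_mul_fderiv_apply_of_hasCompactSupport {u g : E → ℝ} (hu : ContDiff ℝ 1 u)
    (huc : HasCompactSupport u) (hg : ContDiff ℝ 1 g) (v : E) :
    ∫ x, u x * fderiv ℝ g x v ∂μ = -∫ x, fderiv ℝ u x v * g x ∂μ := by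
  refine integral_mul_fderiv_eq_neg_fderiv_mul_of_integrable ?_ ?_ ?_
    (fun x _ => hu.differentiable one_ne_zero x) (fun x _ => hg.differentiable one_ne_zero x)
  · exact ((continuous_fderiv_apply hu v).mul hg.continuous).integrable_of_hasCompactSupport
      (huc.fderiv_apply (𝕜 := ℝ) v).mul_right
  · exact (hu.continuous.mul (continuous_fderiv_apply hg v)).integrable_of_hasCompactSupport
      huc.mul_right
  · exact (hu.continuous.mul hg.continuous).integrable_of_hasCompactSupport huc.mul_right

theorem integral_mul_fderiv_fderiv_apply_of_hasCompactSupport {u g : E → ℝ}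
    (hu : ContDiff ℝ 2 u) (huc : HasCompactSupport u) (hg : ContDiff ℝ 2 g) (v : E) :
    ∫ x, u x * fderiv ℝ (fun y => fderiv ℝ g y v) x v ∂μ =
      ∫ x, fderiv ℝ (fun y => fderiv ℝ u y v) x v * g x ∂μ := by
  rw [integral_mul_fderiv_apply_of_hasCompactSupport (hu.of_le one_le_two) huc
      (contDiff_one_fderiv_apply hg v),
    integral_mul_fderiv_apply_of_hasCompactSupport (contDiff_one_fderiv_apply hu v)
      (huc.fderiv_apply (𝕜 := ℝ) v) (hg.of_le one_le_two), neg_neg]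

end IntegrationByParts

section EuclidLaplacian

variable {d : ℕ} {u g : EuclideanSpace ℝ (Fin d) → ℝ}

theorem continuous_euclidLaplacian (hg : ContDiff ℝ 2 g) : Continuous (euclidLaplacian g) :=
  continuous_finsetSum _ fun _ _ => continuous_fderiv_apply (contDiff_one_fderiv_apply hg _) _

theorem hasCompactSupport_euclidLaplacian (huc : HasCompactSupport u) :
    HasCompactSupport (euclidLaplacian u) :=
  huc.mono' fun x hx => by
    obtain ⟨i, -, hi⟩ := Finset.exists_ne_zero_of_sum_ne_zero hx
    exact tsupport_fderiv_apply_subset ℝ _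
      (tsupport_fderiv_apply_subset ℝ _ (subset_tsupport _ (mem_support.2 hi)))

theorem euclidLaplacian_comp_const_sub (g : EuclideanSpace ℝ (Fin d) → ℝ)
    (a x : EuclideanSpace ℝ (Fin d)) :
    euclidLaplacian (fun y => g (a - y)) x = euclidLaplacian g (a - x) := by
  refine Finset.sum_congr rfl fun i _ => ?_
  simp only [fderiv_comp_const_sub, neg_apply, fderiv_fun_neg,
    fderiv_comp_const_sub (fun y => fderiv ℝ g y (EuclideanSpace.single i 1)), neg_neg]

theorem integral_mul_euclidLaplacian_of_hasCompactSupport (hu : ContDiff ℝ 2 u)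
    (huc : HasCompactSupport u) (hg : ContDiff ℝ 2 g) :
    ∫ x, u x * euclidLaplacian g x = ∫ x, euclidLaplacian u x * g x := by
  simp only [euclidLaplacian, Finset.mul_sum, Finset.sum_mul]
  rw [integral_finsetSum, integral_finsetSum]
  · exact Finset.sum_congr rfl fun i _ =>
      integral_mul_fderiv_fderiv_apply_of_hasCompactSupport hu huc hg _
  · exact fun i _ => ((continuous_fderiv_apply (contDiff_one_fderiv_apply hu _) _).mul
      hg.continuous).integrable_of_hasCompactSupport
      ((huc.fderiv_apply (𝕜 := ℝ) _).fderiv_apply (𝕜 := ℝ) _).mul_right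
  · exact fun i _ => (hu.continuous.mul (continuous_fderiv_apply
      (contDiff_one_fderiv_apply hg _) _)).integrable_of_hasCompactSupport huc.mul_right

theorem convolution_euclidLaplacian_add_mul_eq_zero (hu : ContDiff ℝ 2 u)
    (huc : HasCompactSupport u) (hg : ContDiff ℝ 2 g) {lam : ℝ}
    (heig : ∀ x, euclidLaplacian g x = -lam * g x) :
    (fun x => euclidLaplacian u x + lam * u x) ⋆[mul ℝ ℝ] g = 0 := by
  ext x
  have hgx : ContDiff ℝ 2 fun t => g (x - t) := hg.comp (contDiff_const.sub contDiff_id)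
  have hΔ : Integrable fun t => euclidLaplacian u t * g (x - t) :=
    ((continuous_euclidLaplacian hu).mul hgx.continuous).integrable_of_hasCompactSupport
      (hasCompactSupport_euclidLaplacian huc).mul_right
  have hid : Integrable fun t => lam * (u t * g (x - t)) :=
    ((hu.continuous.mul hgx.continuous).integrable_of_hasCompactSupport huc.mul_right).const_mul _
  calc ∫ t, (euclidLaplacian u t + lam * u t) * g (x - t)
      = (∫ t, euclidLaplacian u t * g (x - t)) + ∫ t, lam * (u t * g (x - t)) := by
        rw [← integral_add hΔ hid]
        simp only [add_mul, mul_assoc]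
    _ = ∫ t, (u t * euclidLaplacian (fun s => g (x - s)) t + lam * (u t * g (x - t))) := by
        rw [← integral_mul_euclidLaplacian_of_hasCompactSupport hu huc hgx, ← integral_add _ hid]
        exact (hu.continuous.mul (continuous_euclidLaplacian hgx)).integrable_of_hasCompactSupport
          huc.mul_right
    _ = ∫ _, 0 := by
        congr with t
        rw [euclidLaplacian_comp_const_sub, heig]
        ring
    _ = 0 := integral_zero _ _

theorem euclidLaplacian_comp_norm_sq {h h' h'' : ℝ → ℝ} (hh : ∀ s, HasDerivAt h (h' s) s)
    (hh' : ∀ s, HasDerivAt h' (h'' s) s) (x : EuclideanSpace ℝ (Fin d)) :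
    euclidLaplacian (fun y => h (‖y‖ ^ 2)) x =
      4 * ‖x‖ ^ 2 * h'' (‖x‖ ^ 2) + 2 * d * h' (‖x‖ ^ 2) := by
  have hcomp : ∀ {k k' : ℝ → ℝ}, (∀ s, HasDerivAt k (k' s) s) → ∀ y : EuclideanSpace ℝ (Fin d),
      HasFDerivAt (fun y => k (‖y‖ ^ 2)) (k' (‖y‖ ^ 2) • (2 • innerSL ℝ y)) y := fun hk y =>
    (hk _).comp_hasFDerivAt y (hasStrictFDerivAt_norm_sq y).hasFDerivAt
  have hfirst : ∀ i (y : EuclideanSpace ℝ (Fin d)),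
      fderiv ℝ (fun y => h (‖y‖ ^ 2)) y (EuclideanSpace.single i 1) =
        h' (‖y‖ ^ 2) * (2 * y i) := fun i y => by
    simp [(hcomp hh y).fderiv, EuclideanSpace.inner_single_right]
  have hsecond : ∀ i, fderiv ℝ (fun y : EuclideanSpace ℝ (Fin d) => h' (‖y‖ ^ 2) * (2 * y i)) x
      (EuclideanSpace.single i 1) = 4 * h'' (‖x‖ ^ 2) * x i ^ 2 + 2 * h' (‖x‖ ^ 2) := fun i => by
    have hcoord : HasFDerivAt (fun y : EuclideanSpace ℝ (Fin d) => 2 * y i)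
        ((2 : ℝ) • EuclideanSpace.proj i) x :=
      (EuclideanSpace.proj (𝕜 := ℝ) i).hasFDerivAt.const_mul 2
    simp [((hcomp hh' x).fun_mul hcoord).fderiv, EuclideanSpace.inner_single_right]
    ring
  simp only [euclidLaplacian, hfirst, hsecond, Finset.sum_add_distrib, ← Finset.mul_sum,
    EuclideanSpace.real_norm_sq_eq x, Finset.sum_const, Finset.card_univ, Fintype.card_fin,
    nsmul_eq_mul]
  ring

end EuclidLaplacian

section HelmholtzWeight

theorem hasDerivAt_max_zero_pow (n : ℕ) (v : ℝ) :
    HasDerivAt (fun v : ℝ => max v 0 ^ (n + 2)) ((n + 2) * max v 0 ^ (n + 1)) v := by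
  rcases lt_trichotomy v 0 with hv | rfl | hv
  · have hloc : (fun v : ℝ => max v 0 ^ (n + 2)) =ᶠ[nhds v] fun _ => 0 := by
      filter_upwards [gt_mem_nhds hv] with u hu
      simp [max_eq_right hu.le]
    simpa [max_eq_right hv.le] using (hasDerivAt_const v (0 : ℝ)).congr_of_eventuallyEq hloc
  · have hbound : (fun v : ℝ => max v 0 ^ (n + 2)) =O[nhds 0] fun v => ‖v - 0‖ ^ (n + 2) :=
      Asymptotics.IsBigO.of_norm_le fun v => by
        rw [norm_pow, sub_zero, Real.norm_eq_abs, abs_of_nonneg (le_max_right v 0)]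
        exact pow_le_pow_left₀ (le_max_right v 0) (max_le (le_abs_self v) (abs_nonneg v)) _
    simpa using (hbound.hasFDerivAt (𝕜 := ℝ) (by omega)).hasDerivAt
  · have hloc : (fun v : ℝ => max v 0 ^ (n + 2)) =ᶠ[nhds v] fun v => v ^ (n + 2) := by
      filter_upwards [lt_mem_nhds hv] with u hu
      rw [max_eq_left hu.le]
    simpa [max_eq_left hv.le] using (hasDerivAt_pow (n + 2) v).congr_of_eventuallyEq hloc

theorem contDiff_max_zero_pow (n : ℕ) : ContDiff ℝ n fun v : ℝ => max v 0 ^ (n + 1) := by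
  induction n with
  | zero => exact contDiff_zero.2 (by fun_prop)
  | succ n ih =>
    push_cast
    refine contDiff_succ_iff_deriv.2
      ⟨fun v => (hasDerivAt_max_zero_pow n v).differentiableAt, by simp, ?_⟩
    rw [funext fun v => (hasDerivAt_max_zero_pow n v).deriv]
    exact contDiff_const.mul ih

variable {d : ℕ} {R lam : ℝ}

/-- The `C²` bump `(R² - ‖x‖²)₊³` on the ball of radius `R`. The cube is the smallest integer
power whose Laplacian is still continuous. -/
noncomputable def cubicBump (R : ℝ) (x : EuclideanSpace ℝ (Fin d)) : ℝ :=
  max (R ^ 2 - ‖x‖ ^ 2) 0 ^ 3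

/-- The weight `(Δ + λ) u` for the bump `u` on the ball of radius `R`. Since `Δ + λ` is
self-adjoint, convolution with it annihilates the Laplacian eigenfunctions of eigenvalue `λ`. -/
noncomputable def helmholtzWeight (R lam : ℝ) (x : EuclideanSpace ℝ (Fin d)) : ℝ :=
  euclidLaplacian (cubicBump R) x + lam * cubicBump R x

theorem contDiff_cubicBump : ContDiff ℝ 2 (cubicBump R : EuclideanSpace ℝ (Fin d) → ℝ) :=
  (contDiff_max_zero_pow 2).comp (contDiff_const.sub (contDiff_norm_sq ℝ))

theorem hasCompactSupport_cubicBump (hR : 0 ≤ R) :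
    HasCompactSupport (cubicBump R : EuclideanSpace ℝ (Fin d) → ℝ) :=
  HasCompactSupport.intro (isCompact_closedBall 0 R) fun x hx => by
    have hlt : R ^ 2 - ‖x‖ ^ 2 < 0 := by
      nlinarith [show R < ‖x‖ by simpa using hx]
    simp [cubicBump, max_eq_right hlt.le]

theorem euclidLaplacian_cubicBump (x : EuclideanSpace ℝ (Fin d)) :
    euclidLaplacian (cubicBump R) x =
      24 * ‖x‖ ^ 2 * max (R ^ 2 - ‖x‖ ^ 2) 0 - 6 * d * max (R ^ 2 - ‖x‖ ^ 2) 0 ^ 2 := by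
  have hcube : ∀ s, HasDerivAt (fun s => max (R ^ 2 - s) 0 ^ 3) (-3 * max (R ^ 2 - s) 0 ^ 2) s :=
    fun s => ((hasDerivAt_max_zero_pow 1 _).comp s ((hasDerivAt_id s).const_sub _)).congr_deriv
      (by norm_num)
  have hsquare : ∀ s, HasDerivAt (fun s => -3 * max (R ^ 2 - s) 0 ^ 2) (6 * max (R ^ 2 - s) 0) s :=
    fun s => (((hasDerivAt_max_zero_pow 0 _).comp s
      ((hasDerivAt_id s).const_sub _)).const_mul (-3)).congr_deriv (by norm_num; ring)
  exact (euclidLaplacian_comp_norm_sq hcube hsquare x).trans (by ring)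

theorem helmholtzWeight_eq (x : EuclideanSpace ℝ (Fin d)) :
    helmholtzWeight R lam x = max (R ^ 2 - ‖x‖ ^ 2) 0 *
      (lam * max (R ^ 2 - ‖x‖ ^ 2) 0 ^ 2 - 6 * (d + 4) * max (R ^ 2 - ‖x‖ ^ 2) 0
        + 24 * R ^ 2) := by
  rw [helmholtzWeight, euclidLaplacian_cubicBump, cubicBump]
  rcases max_cases (R ^ 2 - ‖x‖ ^ 2) 0 with ⟨hmax, -⟩ | ⟨hmax, -⟩
  · rw [hmax]; ring
  · simp [hmax]

theorem helmholtz_quadratic_pos (hlam : 0 < lam) {D : ℝ} (hR : 3 * D ^ 2 < 8 * (lam * R ^ 2))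
    (b : ℝ) : 0 < lam * b ^ 2 - 6 * D * b + 24 * R ^ 2 := by
  refine pos_of_mul_pos_right (a := lam) ?_ hlam.le
  calc 0 < (lam * b - 3 * D) ^ 2 + 3 * (8 * (lam * R ^ 2) - 3 * D ^ 2) :=
        add_pos_of_nonneg_of_pos (sq_nonneg _) (mul_pos three_pos (sub_pos.2 hR))
    _ = lam * (lam * b ^ 2 - 6 * D * b + 24 * R ^ 2) := by ring

theorem isBallWeight_helmholtzWeight (hR : 0 < R) (hlam : 0 < lam)
    (hRlam : 3 * ((d : ℝ) + 4) ^ 2 < 8 * (lam * R ^ 2)) :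
    IsBallWeight (helmholtzWeight R lam : EuclideanSpace ℝ (Fin d) → ℝ) R where
  continuous := (continuous_euclidLaplacian contDiff_cubicBump).add
    (contDiff_cubicBump.continuous.const_smul lam)
  nonneg x := by
    rw [helmholtzWeight_eq]
    exact mul_nonneg (le_max_right _ _) (helmholtz_quadratic_pos hlam hRlam _).le
  ne_zero := ne_iff.2 ⟨0, by
    rw [helmholtzWeight_eq]
    exact mul_ne_zero (by simp [hR.ne']) (helmholtz_quadratic_pos hlam hRlam _).ne'⟩
  support_subset x hx := by
    rw [mem_support, helmholtzWeight_eq] at hx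
    have hmax : 0 < R ^ 2 - ‖x‖ ^ 2 := by
      by_contra! hle
      simp [max_eq_right hle] at hx
    simpa using (pow_le_pow_iff_left₀ (norm_nonneg x) hR.le two_ne_zero).1 (sub_pos.1 hmax).le

end HelmholtzWeight

theorem sqrt_three_eighths_mul_add_four_lt_two_pi {d : ℝ} (hd : d ≤ 6) :
    √(3 / 8) * (d + 4) < 2 * π := by
  have hsqrt : √(3 / 8) ≤ 0.62 := Real.sqrt_le_iff.2 (by norm_num)
  nlinarith [Real.pi_gt_d2, Real.sqrt_nonneg (3 / 8)]

theorem linear_combination_eigenfunctions_zero_in_ball_general {d : ℕ} {ι : Type*} [Fintype ι]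
    {φ : ι → EuclideanSpace ℝ (Fin d) → ℝ} {lam : ι → ℝ} (hlam : ∀ k, 0 < lam k)
    (hφ : ∀ k, ContDiff ℝ 2 (φ k)) (heig : ∀ k x, euclidLaplacian (φ k) x = -lam k * φ k x)
    {c : ℝ} (hc : √(3 / 8) * (d + 4) < c) (a : ι → ℝ) (z : EuclideanSpace ℝ (Fin d)) :
    ∃ y ∈ closedBall z (c * ∑ k, 1 / √(lam k)), ∑ k, a k * φ k y = 0 := by
  have hcpos : 0 < c := lt_of_le_of_lt (by positivity) hc
  have hRpos : ∀ k, 0 < c * (1 / √(lam k)) := fun k =>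
    mul_pos hcpos (one_div_pos.2 (Real.sqrt_pos.2 (hlam k)))
  have hc_sq : 3 * ((d : ℝ) + 4) ^ 2 < 8 * c ^ 2 := by
    have := pow_lt_pow_left₀ hc (by positivity) two_ne_zero
    rw [mul_pow, Real.sq_sqrt (by norm_num)] at this
    linarith
  have hRlam : ∀ k, lam k * (c * (1 / √(lam k))) ^ 2 = c ^ 2 := fun k => by
    rw [mul_pow, div_pow, Real.sq_sqrt (hlam k).le]
    field_simp [(hlam k).ne']
  rw [Finset.mul_sum]
  refine IsBallWeight.exists_mem_closedBall_sum_eq_zero (μ := volume)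
    (fun k => isBallWeight_helmholtzWeight (hRpos k) (hlam k) (by rwa [hRlam k])) Finset.univ
    (ψ := fun k => a k • φ k) (fun k => (hφ k).continuous.const_smul _) (fun k => ?_) z
  rw [convolution_smul, ← smul_zero (a k)]
  exact congrArg _ (convolution_euclidLaplacian_add_mul_eq_zero contDiff_cubicBump
    (hasCompactSupport_cubicBump (hRpos k).le) (hφ k) (heig k))

/-- **Theorem 3.** A linear combination `f = Σ_{k=1}^n a_k φ_k` of smooth global
Laplacian eigenfunctions `−Δφ_k = λ_k φ_k` on `ℝ^d`, `d ∈ {2,3}`, has a zero in every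
closed ball of radius `2π · Σ_{k=1}^n λ_k^{-1/2}`. -/
theorem linear_combination_eigenfunctions_zero_in_ball {d : ℕ} (hd : d = 2 ∨ d = 3)
    (n : ℕ) (φ : Fin n → EuclideanSpace ℝ (Fin d) → ℝ)
    (lam : Fin n → ℝ) (hlam : ∀ k, 0 < lam k)
    (hφ : ∀ k, ContDiff ℝ (⊤ : ℕ∞) (φ k))
    (heig : ∀ k x, euclidLaplacian (φ k) x = -lam k * φ k x)
    (a : Fin n → ℝ) (f : EuclideanSpace ℝ (Fin d) → ℝ)
    (hf : ∀ x, f x = ∑ k, a k * φ k x)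
    (z : EuclideanSpace ℝ (Fin d)) :
    ∃ y : EuclideanSpace ℝ (Fin d),
      ‖y - z‖ ≤ 2 * π * ∑ k, 1 / Real.sqrt (lam k) ∧ f y = 0 := by
  have hd6 : (d : ℝ) ≤ 6 := by exact_mod_cast (by omega : d ≤ 6)
  simpa only [mem_closedBall, dist_eq_norm, hf] using
    linear_combination_eigenfunctions_zero_in_ball_general hlam
      (fun k => contDiff_infty.1 (hφ k) 2) heig
      (sqrt_three_eighths_mul_add_four_lt_two_pi hd6) a z
end
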